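/- arXiv:2409.14994 — 2 statements merged into one kernel-verified Lean document; each statement's English description precedes it below -/
import Mathlib

section
/- Bound states of the isotonic oscillator: let n ∈ ℕ₀, let m ∈ ℂ with Re(m) > −1, let k ∈ ℂ with Re(k) > 0, and set β := k(2n + m + 1). Then the function u(v) := 𝕀_{β/k, m}(√k · v) on ]0,∞[ (with √k the principal square root) satisfies: (i) −u''(v) + (m² − 1/4)·v^{−2}·u(v) + k²v²·u(v) = 2β·u(v) for all v > 0; (ii) ∫_0^∞ |u(v)|² dv < ∞. Hence 2β = 2k(2n + m + 1) belongs to the point spectrum of the isotonic oscillator N_{k,m} = −∂_v² + (m² − 1/4)/v² + k²v². -/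
/-!
The entire function `F(a; c; w) = ₁𝐅₁(a; c; w)` satisfies `F' = a F(a+1; c+1)` and the contiguous
relations `w F' + a F = a F(a+1; c)` and `w F'(a; c+1) + c F(a; c+1) = F(a; c)`.
Eliminating the shifted functions gives Kummer's equation `w F'' + (c - w) F' = a F`, for every `c`
because `1 / Γ(c + n) = (c + n) / Γ(c + n + 1)` persists at the poles.
For `f(z) = z ^ (1/2 + m) * exp (-z²/2) * F(z²) = 𝕀_{β,m}(z)` it becomes
`-f'' + ((m² - 1/4) / z² + z²) f = 2β f`, and rescaling by `√k` gives the eigenvalue equation, for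
arbitrary `β`. The quantisation `β / k = 2n + m + 1` makes the first parameter of `₁𝐅₁` equal to
`-n`, so the series is a polynomial; then `Re k > 0` gives Gaussian decay at infinity and
`Re m > -1` square integrability at the origin.
-/

open Complex Set MeasureTheory

/-- Olver-normalized confluent hypergeometric function
`₁𝐅₁(a; c; w) = ∑ (a)ₙ wⁿ/(n! Γ(c+n))`. -/
noncomputable def oneF1reg (a c w : ℂ) : ℂ :=
  ∑' n : ℕ, (ascPochhammer ℂ n).eval a * w ^ n / ((n.factorial : ℂ) * Complex.Gamma (c + n))

/-- Isotonic-oscillator Whittaker-type function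
`𝕀_{β,m}(z) = z^{1/2+m} e^{-z²/2} ₁𝐅₁((1+m-β)/2; 1+m; z²)` (principal branch powers). -/
noncomputable def isoI (β m z : ℂ) : ℂ :=
  z ^ ((1 : ℂ) / 2 + m) * Complex.exp (-z ^ 2 / 2) *
    oneF1reg ((1 + m - β) / 2) (1 + m) (z ^ 2)

open Filter Polynomial Topology

section Kummer

variable (a c : ℂ)

/-- The `n`-th summand of the series `oneF1reg a c w`, as a function of `w`, so that the series can
be differentiated term by term. -/
noncomputable def oneF1regTerm (n : ℕ) (w : ℂ) : ℂ :=
  (ascPochhammer ℂ n).eval a * w ^ n / ((n.factorial : ℂ) * Gamma (c + n))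

lemma oneF1regTerm_eq_mul_add_one_right (n : ℕ) (w : ℂ) :
    oneF1regTerm a c n w = (c + n) * oneF1regTerm a (c + 1) n w := by
  have hΓ : 1 / Gamma (c + n) = (c + n) * (1 / Gamma (c + 1 + n)) := by
    rw [add_right_comm]
    simpa only [one_div] using one_div_Gamma_eq_self_mul_one_div_Gamma_add_one (c + n)
  calc oneF1regTerm a c n w
      = (ascPochhammer ℂ n).eval a * w ^ n / n.factorial * (1 / Gamma (c + n)) := by
        rw [oneF1regTerm]; ring
    _ = (c + n) * oneF1regTerm a (c + 1) n w := by
        rw [hΓ, oneF1regTerm]; ring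

lemma oneF1regTerm_succ (n : ℕ) (w : ℂ) :
    oneF1regTerm a c (n + 1) w = (a + n) * w / (n + 1) * oneF1regTerm a (c + 1) n w := by
  simp only [oneF1regTerm, ascPochhammer_succ_eval, Nat.factorial_succ, Nat.cast_mul,
    Nat.cast_succ, pow_succ, ← add_assoc, add_right_comm c 1, div_mul_div_comm]
  ring

lemma mul_oneF1regTerm_add_one_left (n : ℕ) (w : ℂ) :
    a * oneF1regTerm (a + 1) c n w = (a + n) * oneF1regTerm a c n w := by
  have hpoch : a * (ascPochhammer ℂ n).eval (a + 1) = (ascPochhammer ℂ n).eval a * (a + n) := by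
    rw [← ascPochhammer_succ_eval, ascPochhammer_succ_left]
    simp
  simp only [oneF1regTerm]
  linear_combination w ^ n / ((n.factorial : ℂ) * Gamma (c + n)) * hpoch

lemma hasDerivAt_oneF1regTerm (n : ℕ) (w : ℂ) :
    HasDerivAt (oneF1regTerm a c n)
      ((ascPochhammer ℂ n).eval a * (n * w ^ (n - 1)) / ((n.factorial : ℂ) * Gamma (c + n))) w :=
  ((hasDerivAt_pow n w).const_mul _).div_const _

lemma mul_deriv_oneF1regTerm (n : ℕ) (w : ℂ) :
    w * deriv (oneF1regTerm a c n) w = n * oneF1regTerm a c n w := by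
  rw [(hasDerivAt_oneF1regTerm a c n w).deriv, oneF1regTerm]
  cases n with
  | zero => simp
  | succ n => rw [Nat.add_sub_cancel, pow_succ]; ring

lemma deriv_oneF1regTerm_zero (w : ℂ) : deriv (oneF1regTerm a c 0) w = 0 := by
  simp [(hasDerivAt_oneF1regTerm a c 0 w).deriv]

lemma deriv_oneF1regTerm_succ (n : ℕ) (w : ℂ) :
    deriv (oneF1regTerm a c (n + 1)) w = a * oneF1regTerm (a + 1) (c + 1) n w := by
  have hn : (n : ℂ) + 1 ≠ 0 := n.cast_add_one_ne_zero
  rw [(hasDerivAt_oneF1regTerm a c (n + 1) w).deriv, mul_oneF1regTerm_add_one_left, oneF1regTerm,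
    ascPochhammer_succ_eval, Nat.factorial_succ]
  push_cast
  rw [← add_assoc, add_right_comm c 1]
  field_simp

lemma tendsto_oneF1regTerm_ratio (w : ℂ) :
    Tendsto (fun n : ℕ => (a + n) * w / ((n + 1) * (c + n))) atTop (𝓝 0) := by
  have hquot : Tendsto (fun n : ℕ => (a + 1 * n) / (c + 1 * n)) atTop (𝓝 (1 / 1)) :=
    tendsto_add_mul_div_add_mul_atTop_nhds a c 1 one_ne_zero
  have hinv : Tendsto (fun n : ℕ => 1 / ((n : ℂ) + 1)) atTop (𝓝 0) :=
    tendsto_one_div_add_atTop_nhds_zero_nat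
  convert! (hquot.mul hinv).const_mul w using 2
  · rw [div_mul_div_comm]; ring
  · simp

lemma summable_oneF1regTerm (w : ℂ) : Summable fun n => oneF1regTerm a c n w := by
  refine summable_of_ratio_norm_eventually_le (r := 1 / 2) (by norm_num) ?_
  have hratio : ∀ᶠ n : ℕ in atTop, ‖(a + n) * w / ((n + 1) * (c + n))‖ < 1 / 2 :=
    (tendsto_oneF1regTerm_ratio a c w).norm.eventually_lt_const (by norm_num)
  have hpole : ∀ᶠ n : ℕ in atTop, c + n ≠ 0 := by
    filter_upwards [eventually_gt_atTop ⌈‖c‖⌉₊] with n hn h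
    have : ‖c‖ = n := by rw [eq_neg_of_add_eq_zero_left h, norm_neg, Complex.norm_natCast]
    exact absurd (Nat.lt_of_ceil_lt hn) this.not_lt
  filter_upwards [hratio, hpole] with n hn hc
  have hsucc : oneF1regTerm a c (n + 1) w
      = (a + n) * w / ((n + 1) * (c + n)) * oneF1regTerm a c n w := by
    rw [oneF1regTerm_succ, oneF1regTerm_eq_mul_add_one_right a c]
    field_simp
  rw [hsucc, norm_mul]
  gcongr

lemma hasSum_oneF1reg (w : ℂ) : HasSum (fun n => oneF1regTerm a c n w) (oneF1reg a c w) :=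
  (summable_oneF1regTerm a c w).hasSum

lemma differentiable_oneF1regTerm (n : ℕ) : Differentiable ℂ (oneF1regTerm a c n) :=
  fun w => (hasDerivAt_oneF1regTerm a c n w).differentiableAt

lemma norm_oneF1regTerm_le_of_mem_ball {R : ℝ} (n : ℕ) (w : ℂ) (hw : w ∈ Metric.ball 0 R) :
    ‖oneF1regTerm a c n w‖ ≤ ‖oneF1regTerm a c n R‖ := by
  have hwR : ‖w‖ ≤ ‖(R : ℂ)‖ :=
    calc ‖w‖ ≤ R := (mem_ball_zero_iff.1 hw).le
      _ ≤ ‖(R : ℂ)‖ := by rw [norm_real]; exact Real.le_norm_self R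
  simp only [oneF1regTerm, norm_div, norm_mul, norm_pow]
  gcongr

lemma differentiable_oneF1reg : Differentiable ℂ (oneF1reg a c) := fun w =>
  (differentiableOn_tsum_of_summable_norm (summable_oneF1regTerm a c (‖w‖ + 1 : ℝ)).norm
    (fun n => (differentiable_oneF1regTerm a c n).differentiableOn) Metric.isOpen_ball
    (norm_oneF1regTerm_le_of_mem_ball a c)).differentiableAt
    (Metric.isOpen_ball.mem_nhds (by simp))

lemma hasSum_deriv_oneF1regTerm (w : ℂ) :
    HasSum (fun n => deriv (oneF1regTerm a c n) w) (deriv (oneF1reg a c) w) :=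
  hasSum_deriv_of_summable_norm (summable_oneF1regTerm a c (‖w‖ + 1 : ℝ)).norm
    (fun n => (differentiable_oneF1regTerm a c n).differentiableOn) Metric.isOpen_ball
    (norm_oneF1regTerm_le_of_mem_ball a c) (by simp)

lemma hasSum_natCast_mul_oneF1regTerm (w : ℂ) :
    HasSum (fun n : ℕ => n * oneF1regTerm a c n w) (w * deriv (oneF1reg a c) w) := by
  simpa only [mul_deriv_oneF1regTerm] using
    (hasSum_deriv_oneF1regTerm a c w).mul_left w

lemma deriv_oneF1reg : deriv (oneF1reg a c) = fun w => a * oneF1reg (a + 1) (c + 1) w := by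
  ext w
  have hshift := (hasSum_nat_add_iff' 1).2 (hasSum_deriv_oneF1regTerm a c w)
  simp only [Finset.sum_range_one, deriv_oneF1regTerm_zero, sub_zero,
    deriv_oneF1regTerm_succ] at hshift
  exact hshift.unique ((hasSum_oneF1reg (a + 1) (c + 1) w).mul_left a)

lemma mul_deriv_oneF1reg_add_mul (w : ℂ) :
    w * deriv (oneF1reg a c) w + a * oneF1reg a c w = a * oneF1reg (a + 1) c w := by
  have h := (hasSum_natCast_mul_oneF1regTerm a c w).add ((hasSum_oneF1reg a c w).mul_left a)
  refine h.unique ?_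
  convert! (hasSum_oneF1reg (a + 1) c w).mul_left a using 2 with n
  rw [mul_oneF1regTerm_add_one_left]
  ring

lemma mul_deriv_oneF1reg_add_one_right_add_mul (w : ℂ) :
    w * deriv (oneF1reg a (c + 1)) w + c * oneF1reg a (c + 1) w = oneF1reg a c w := by
  have h := (hasSum_natCast_mul_oneF1regTerm a (c + 1) w).add
    ((hasSum_oneF1reg a (c + 1) w).mul_left c)
  refine h.unique ?_
  convert! hasSum_oneF1reg a c w using 2 with n
  rw [oneF1regTerm_eq_mul_add_one_right a c]
  ring

theorem kummer_ode_oneF1reg (w : ℂ) :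
    w * deriv (deriv (oneF1reg a c)) w + (c - w) * deriv (oneF1reg a c) w = a * oneF1reg a c w := by
  have hderiv2 : deriv (deriv (oneF1reg a c)) w = a * deriv (oneF1reg (a + 1) (c + 1)) w := by
    rw [deriv_oneF1reg a c, deriv_const_mul_field]
  have hderiv := congrFun (deriv_oneF1reg a c) w
  rw [hderiv2]
  linear_combination a * mul_deriv_oneF1reg_add_one_right_add_mul (a + 1) c w
    - mul_deriv_oneF1reg_add_mul a c w + c * hderiv

lemma exists_polynomial_oneF1reg_neg_natCast (n : ℕ) :
    ∃ P : ℂ[X], ∀ w, oneF1reg (-(n : ℂ)) c w = P.eval w := by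
  refine ⟨∑ j ∈ Finset.range (n + 1),
    monomial j ((ascPochhammer ℂ j).eval (-(n : ℂ)) / ((j.factorial : ℂ) * Gamma (c + j))),
    fun w => ?_⟩
  have hvanish (j : ℕ) (hj : j ∉ Finset.range (n + 1)) : oneF1regTerm (-(n : ℂ)) c j w = 0 := by
    rw [oneF1regTerm, ascPochhammer_eval_neg_coe_nat_of_lt (by simpa using hj)]
    simp
  rw [(hasSum_oneF1reg (-(n : ℂ)) c w).unique (hasSum_sum_of_ne_finset_zero hvanish),
    eval_finsetSum]
  simp only [eval_monomial, oneF1regTerm, div_mul_eq_mul_div]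

end Kummer

section Isotonic

lemma hasDerivAt_cpow_mul_cexp_neg_sq_mul {g : ℂ → ℂ} {g' z : ℂ} (s : ℂ) (hz : z ∈ slitPlane)
    (hg : HasDerivAt g g' (z ^ 2)) :
    HasDerivAt (fun z => z ^ s * exp (-z ^ 2 / 2) * g (z ^ 2))
      (z ^ (s - 1) * exp (-z ^ 2 / 2) * ((s - z ^ 2) * g (z ^ 2) + 2 * z ^ 2 * g')) z := by
  have hz0 : z ≠ 0 := slitPlane_ne_zero hz
  have hsq : HasDerivAt (fun z : ℂ => z ^ 2) (2 * z) z := by simpa using hasDerivAt_pow 2 z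
  have hpow : HasDerivAt (fun z : ℂ => z ^ s) (s * z ^ (s - 1) * 1) z :=
    (hasDerivAt_id z).cpow_const hz
  have hexp := (hsq.neg.div_const 2).cexp
  have hcomp : HasDerivAt (fun z => g (z ^ 2)) (g' * (2 * z)) z := hg.comp z hsq
  have hz_pow : z ^ s = z ^ (s - 1) * z := by
    rw [cpow_sub _ _ hz0, cpow_one, div_mul_cancel₀ _ hz0]
  refine ((hpow.mul hexp).mul hcomp).congr_deriv ?_
  simp only [Pi.mul_apply, Pi.neg_apply]
  rw [hz_pow]
  ring

variable {β m : ℂ}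

lemma hasDerivAt_isoI {z : ℂ} (hz : z ∈ slitPlane) :
    HasDerivAt (isoI β m)
      (z ^ (1 / 2 + m - 1) * exp (-z ^ 2 / 2) *
        ((1 / 2 + m - z ^ 2) * oneF1reg ((1 + m - β) / 2) (1 + m) (z ^ 2) +
          2 * z ^ 2 * deriv (oneF1reg ((1 + m - β) / 2) (1 + m)) (z ^ 2))) z :=
  hasDerivAt_cpow_mul_cexp_neg_sq_mul _ hz (differentiable_oneF1reg _ _ _).hasDerivAt

lemma differentiableOn_isoI : DifferentiableOn ℂ (isoI β m) slitPlane :=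
  fun _ hz => (hasDerivAt_isoI hz).differentiableAt.differentiableWithinAt

lemma deriv_deriv_isoI {z : ℂ} (hz : z ∈ slitPlane) :
    deriv (deriv (isoI β m)) z =
      ((m ^ 2 - 1 / 4) / z ^ 2 + z ^ 2 - 2 * β) * isoI β m z := by
  set F := oneF1reg ((1 + m - β) / 2) (1 + m) with hF
  have hF1 : HasDerivAt F (deriv F (z ^ 2)) (z ^ 2) := (differentiable_oneF1reg _ _ _).hasDerivAt
  have hF2 : HasDerivAt (deriv F) (deriv (deriv F) (z ^ 2)) (z ^ 2) :=
    (differentiable_oneF1reg _ _).deriv.differentiableAt.hasDerivAt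
  have hg : HasDerivAt (fun w => (1 / 2 + m - w) * F w + 2 * w * deriv F w)
      (-1 * F (z ^ 2) + (1 / 2 + m - z ^ 2) * deriv F (z ^ 2) +
        (2 * 1 * deriv F (z ^ 2) + 2 * z ^ 2 * deriv (deriv F) (z ^ 2))) (z ^ 2) :=
    (((hasDerivAt_id _).const_sub _).mul hF1).add (((hasDerivAt_id _).const_mul 2).mul hF2)
  have hderiv : deriv (isoI β m) =ᶠ[𝓝 z] fun z => z ^ (1 / 2 + m - 1) * exp (-z ^ 2 / 2) *
      ((1 / 2 + m - z ^ 2) * F (z ^ 2) + 2 * z ^ 2 * deriv F (z ^ 2)) := by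
    filter_upwards [isOpen_slitPlane.mem_nhds hz] with x hx using (hasDerivAt_isoI hx).deriv
  have hz0 : z ≠ 0 := slitPlane_ne_zero hz
  have hz_pow : z ^ (1 / 2 + m) = z ^ (1 / 2 + m - 1 - 1) * z ^ 2 := by
    rw [sub_sub, one_add_one_eq_two, cpow_sub _ _ hz0, cpow_ofNat,
      div_mul_cancel₀ _ (pow_ne_zero 2 hz0)]
  have hkummer := kummer_ode_oneF1reg ((1 + m - β) / 2) (1 + m) (z ^ 2)
  rw [← hF] at hkummer
  rw [hderiv.deriv_eq, (hasDerivAt_cpow_mul_cexp_neg_sq_mul _ hz hg).deriv, isoI, hz_pow, ← hF]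
  generalize z ^ (1 / 2 + m - 1 - 1) = p, exp (-z ^ 2 / 2) = e
  have hdiv : (m ^ 2 - 1 / 4) / z ^ 2 * z ^ 2 = m ^ 2 - 1 / 4 :=
    div_mul_cancel₀ _ (pow_ne_zero 2 hz0)
  linear_combination 4 * z ^ 2 * p * e * hkummer - p * e * F (z ^ 2) * hdiv

lemma deriv_deriv_comp_mul_ofReal {f : ℂ → ℂ} {U : Set ℂ} (hU : IsOpen U)
    (hf : DifferentiableOn ℂ f U) {q : ℂ} {v : ℝ} (hv : q * v ∈ U) :
    deriv (deriv fun x : ℝ => f (q * x)) v = q ^ 2 * deriv (deriv f) (q * v) := by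
  have hchain {g : ℂ → ℂ} (hg : DifferentiableOn ℂ g U) {x : ℝ} (hx : q * x ∈ U) :
      HasDerivAt (fun x : ℝ => g (q * x)) (q * deriv g (q * x)) x := by
    have hmul : HasDerivAt (fun z : ℂ => q * z) q (x : ℂ) := by
      simpa using (hasDerivAt_id (x : ℂ)).const_mul q
    have hg' := (hg.differentiableAt (hU.mem_nhds hx)).hasDerivAt
    simpa [mul_comm] using (hg'.comp (x : ℂ) hmul).comp_ofReal
  have hderiv : deriv (fun x : ℝ => f (q * x)) =ᶠ[𝓝 v] fun x => q * deriv f (q * x) := by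
    have hcont : Continuous fun x : ℝ => q * (x : ℂ) := by fun_prop
    filter_upwards [hcont.continuousAt.preimage_mem_nhds (hU.mem_nhds hv)] with x hx
    exact (hchain hf hx).deriv
  rw [hderiv.deriv_eq, ((hchain (hf.deriv hU) hv).const_mul q).deriv]
  ring

lemma mul_ofReal_mem_slitPlane {q : ℂ} (hq : q ∈ slitPlane) {v : ℝ} (hv : 0 < v) :
    q * v ∈ slitPlane := by
  simpa [mem_slitPlane_iff, hv, hv.ne'] using hq

-- Here `q = √k`, whence the potential `(q ^ 2) ^ 2 * v ^ 2 = k² v²`.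
theorem isotonic_eigenvalue_equation {q : ℂ} (hq : q ∈ slitPlane) {v : ℝ} (hv : 0 < v) :
    -deriv (deriv fun x : ℝ => isoI β m (q * x)) v
        + (m ^ 2 - 1 / 4) / (v : ℂ) ^ 2 * isoI β m (q * v)
        + (q ^ 2) ^ 2 * (v : ℂ) ^ 2 * isoI β m (q * v) =
      2 * (q ^ 2 * β) * isoI β m (q * v) := by
  have hqv := mul_ofReal_mem_slitPlane hq hv
  have hq0 : q ≠ 0 := slitPlane_ne_zero hq
  have hv0 : (v : ℂ) ≠ 0 := ofReal_ne_zero.2 hv.ne'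
  rw [deriv_deriv_comp_mul_ofReal isOpen_slitPlane differentiableOn_isoI hqv, deriv_deriv_isoI hqv]
  field_simp
  ring

end Isotonic

section SquareIntegrable

lemma memLp_two_cpow_mul_cexp_neg_mul_sq {s κ : ℂ} (hs : -1 / 2 < s.re) (hκ : 0 < κ.re) :
    MemLp (fun v : ℝ => (v : ℂ) ^ s * exp (-(κ * v ^ 2) / 2)) 2 (volume.restrict (Ioi 0)) := by
  have hmeas : Measurable fun v : ℝ => (v : ℂ) ^ s * exp (-(κ * v ^ 2) / 2) := by fun_prop
  refine (memLp_two_iff_integrable_sq_norm hmeas.aestronglyMeasurable).2 ?_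
  refine IntegrableOn.congr_fun
    (integrableOn_rpow_mul_exp_neg_mul_sq hκ (s := s.re * 2) (by linarith)) (fun v hv => ?_)
    measurableSet_Ioi
  have hv : 0 < v := hv
  have hre : (-(κ * (v : ℂ) ^ 2) / 2).re = -(κ.re * v ^ 2) / 2 := by
    rw [← ofReal_pow, ← ofReal_ofNat, div_ofReal_re, neg_re, re_mul_ofReal]
  simp only [norm_mul, norm_cpow_eq_rpow_re_of_pos hv, norm_exp, hre, mul_pow]
  rw [Real.rpow_mul hv.le, ← Real.exp_nat_mul]
  norm_cast
  congr 2
  ring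

lemma memLp_two_cpow_mul_cexp_neg_mul_sq_mul_eval {s κ : ℂ} (hs : -1 / 2 < s.re) (hκ : 0 < κ.re)
    (P : ℂ[X]) :
    MemLp (fun v : ℝ => (v : ℂ) ^ s * exp (-(κ * v ^ 2) / 2) * P.eval (v : ℂ)) 2
      (volume.restrict (Ioi 0)) := by
  induction P using Polynomial.induction_on' with
  | add P Q hP hQ =>
    simp only [eval_add, mul_add]
    exact hP.add hQ
  | monomial j b =>
    have hsj : -1 / 2 < (s + j).re := by
      rw [add_re, natCast_re]
      linarith [j.cast_nonneg (α := ℝ)]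
    refine ((memLp_two_cpow_mul_cexp_neg_mul_sq hsj hκ).const_mul b).ae_eq
      (ae_restrict_of_forall_mem measurableSet_Ioi fun v hv => ?_)
    have hv0 : (v : ℂ) ≠ 0 := ofReal_ne_zero.2 (ne_of_gt hv)
    simp only [eval_monomial, cpow_add _ _ hv0, cpow_natCast]
    ring

lemma mul_ofReal_cpow {q : ℂ} (hq : q ≠ 0) {v : ℝ} (hv : 0 < v) (s : ℂ) :
    (q * v) ^ s = q ^ s * (v : ℂ) ^ s := by
  have hv0 : (v : ℂ) ≠ 0 := ofReal_ne_zero.2 hv.ne'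
  rw [cpow_def_of_ne_zero (mul_ne_zero hq hv0), cpow_def_of_ne_zero hq, cpow_def_of_ne_zero hv0,
    log_mul_ofReal v hv q hq, ← exp_add, ofReal_log hv.le]
  ring_nf

theorem memLp_two_isoI (n : ℕ) {m q : ℂ} (hm : -1 < m.re) (hq : 0 < (q ^ 2).re) :
    MemLp (fun v : ℝ => isoI (2 * n + m + 1) m (q * v)) 2 (volume.restrict (Ioi 0)) := by
  obtain ⟨P, hP⟩ := exists_polynomial_oneF1reg_neg_natCast (1 + m) n
  have hq0 : q ≠ 0 := by rintro rfl; simp at hq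
  have hs : -1 / 2 < (1 / 2 + m).re := by
    have : (1 / 2 : ℂ).re = 1 / 2 := by norm_num
    rw [add_re, this]
    linarith
  refine ((memLp_two_cpow_mul_cexp_neg_mul_sq_mul_eval hs hq
    (P.comp (C (q ^ 2) * X ^ 2))).const_mul (q ^ (1 / 2 + m))).ae_eq
    (ae_restrict_of_forall_mem measurableSet_Ioi fun v hv => ?_)
  have ha : (1 + m - (2 * n + m + 1)) / 2 = -(n : ℂ) := by ring
  simp only [isoI, ha, hP, mul_ofReal_cpow hq0 hv, mul_pow, eval_comp, eval_mul, eval_C, eval_pow,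
    eval_X, mul_assoc]

end SquareIntegrable

/-- bound states of the isotonic oscillator: for `n ∈ ℕ₀`, `Re m > -1`,
`Re k > 0` and `β = k(2n+m+1)`, the function `u(v) = 𝕀_{β/k, m}(√k v)` solves
`-u'' + (m²-1/4)v⁻²u + k²v²u = 2βu` on `]0,∞[` and is square integrable there; hence
`2β = 2k(2n+m+1)` is in the point spectrum of `N_{k,m}`. -/
theorem isotonic_bound_state (n : ℕ) (m : ℂ) (hm : -1 < m.re) (k : ℂ) (hk : 0 < k.re)
    (β : ℂ) (hβ : β = k * (2 * (n : ℂ) + m + 1))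
    (u : ℝ → ℂ) (hu : ∀ v : ℝ, u v = isoI (β / k) m (k ^ ((1 : ℂ) / 2) * v)) :
    (∀ v : ℝ, 0 < v →
      -deriv (deriv u) v + (m ^ 2 - 1 / 4) / (v : ℂ) ^ 2 * u v +
          k ^ 2 * (v : ℂ) ^ 2 * u v = 2 * β * u v) ∧
    IntegrableOn (fun v : ℝ => ‖u v‖ ^ 2) (Ioi (0 : ℝ)) := by
  obtain rfl : u = fun v : ℝ => isoI (β / k) m (k ^ ((1 : ℂ) / 2) * v) := funext hu
  have hk0 : k ≠ 0 := by rintro rfl; simp at hk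
  have hβk : β / k = 2 * n + m + 1 := by rw [hβ]; field_simp
  have hsq : (k ^ ((1 : ℂ) / 2)) ^ 2 = k := by simp
  have hsqrt : k ^ ((1 : ℂ) / 2) ∈ slitPlane := by
    refine mem_slitPlane_iff.2 (Or.inl ?_)
    rw [one_div, cpow_inv_two_re]
    positivity
  refine ⟨fun v hv => ?_, ?_⟩
  · simpa only [hsq, mul_div_cancel₀ β hk0] using
      isotonic_eigenvalue_equation (β := β / k) (m := m) hsqrt hv
  · have hL2 := memLp_two_isoI n hm (q := k ^ ((1 : ℂ) / 2)) (by rwa [hsq])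
    rw [hβk]
    exact (memLp_two_iff_integrable_sq_norm hL2.1).1 hL2
end

section
/- Point spectrum of the harmonic oscillator: let k > 0 be real and n ∈ ℕ₀. Then the function f(v) := Heₙ(√(2k)·v)·e^{−k v²/2} on ℝ, where Heₙ is the n-th (probabilists') Hermite polynomial, is nonzero, square integrable on ℝ, and satisfies −f''(v) + k²v²·f(v) = k(2n+1)·f(v) for all v ∈ ℝ. Hence k(2n+1) is an eigenvalue of the harmonic oscillator N_k = −∂_v² + k²v² on L²(ℝ). -/
open MeasureTheory Polynomial

/-! Conjugating by the Gaussian `exp (-k v² / 2)` turns differentiation into the operator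
`q ↦ q' - k X q` on polynomials, hence the oscillator `-∂² + k² v²` into
`q ↦ -q'' + 2 k X q' + k q`. For `q = Heₙ (s X)` with `s² = 2 k`, Hermite's equation
`Heₙ'' = X Heₙ' - n Heₙ` says precisely that `-q'' + 2 k X q' = 2 k n q`. -/

section Hermite

theorem derivative_hermite_succ (n : ℕ) :
    derivative (hermite (n + 1)) = ((n : ℤ[X]) + 1) * hermite n := by
  induction n with
  | zero => simp
  | succ n ih =>
    rw [hermite_succ (n + 1), derivative_sub, derivative_mul, derivative_X, ih, derivative_mul,
      derivative_add, derivative_natCast, derivative_one]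
    push_cast
    linear_combination (-(n : ℤ[X]) - 1) * hermite_succ n

theorem derivative_derivative_hermite (n : ℕ) :
    derivative (derivative (hermite n)) = X * derivative (hermite n) - (n : ℤ[X]) * hermite n := by
  have h : derivative (X * hermite n - derivative (hermite n)) = ((n : ℤ[X]) + 1) * hermite n := by
    rw [← hermite_succ, derivative_hermite_succ]
  rw [derivative_sub, derivative_mul, derivative_X] at h
  linear_combination -h

theorem derivative_comp_C_mul_X {R : Type*} [CommSemiring R] (p : R[X]) (s : R) :
    derivative (p.comp (C s * X)) = C s * (derivative p).comp (C s * X) := by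
  rw [derivative_comp, derivative_C_mul, derivative_X, mul_one]

variable {R : Type*} [CommRing R]

/-- The rescaled Hermite polynomial `Heₙ (s X)`, the polynomial factor of the oscillator
eigenfunctions, with coefficients mapped from `ℤ` to `R`. -/
noncomputable def dilatedHermite (s : R) (n : ℕ) : R[X] :=
  ((hermite n).map (algebraMap ℤ R)).comp (C s * X)

theorem eval_dilatedHermite (s : R) (n : ℕ) (x : R) :
    (dilatedHermite s n).eval x = aeval (s * x) (hermite n) := by
  simp only [dilatedHermite, eval_comp, eval_mul, eval_C, eval_X, eval_map_algebraMap]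

theorem dilatedHermite_ne_zero [Nontrivial R] {s : R} (hs : s ∈ nonZeroDivisors R) (n : ℕ) :
    dilatedHermite s n ≠ 0 := by
  have hmonic : ((hermite n).map (algebraMap ℤ R)).Monic := (hermite_monic n).map _
  rw [dilatedHermite, Ne, comp_C_mul_X_eq_zero_iff hs]
  exact hmonic.ne_zero

theorem derivative_derivative_dilatedHermite (s : R) (n : ℕ) :
    derivative (derivative (dilatedHermite s n)) =
      C (s ^ 2) * (X * derivative (dilatedHermite s n) - (n : R[X]) * dilatedHermite s n) := by
  simp only [dilatedHermite, derivative_comp_C_mul_X, derivative_C_mul, derivative_map,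
    derivative_derivative_hermite, Polynomial.map_sub, Polynomial.map_mul, Polynomial.map_natCast,
    map_X, sub_comp, mul_comp, X_comp, natCast_comp, C_pow]
  ring

end Hermite

/-- The product of the polynomial `q` with the Gaussian `v ↦ exp (-k v² / 2)`, the ground state
of the oscillator `-∂² + k² v²`. -/
noncomputable def polyGaussian (k : ℝ) (q : ℝ[X]) (v : ℝ) : ℝ :=
  q.eval v * Real.exp (-k * v ^ 2 / 2)

/-- The harmonic oscillator `-∂² + k² v²`, acting on arbitrary functions through `deriv`, which is
`0` where the derivative does not exist. -/
noncomputable def harmonicOscillator (k : ℝ) (g : ℝ → ℝ) (v : ℝ) : ℝ :=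
  -deriv (deriv g) v + k ^ 2 * v ^ 2 * g v

section PolyGaussian

variable (k : ℝ) (q : ℝ[X])

theorem polyGaussian_eq_zero_iff : polyGaussian k q = 0 ↔ q = 0 := by
  refine ⟨fun h => Polynomial.funext fun v => ?_, fun h => ?_⟩
  · simpa [polyGaussian] using congrFun h v
  · ext v
    simp [polyGaussian, h]

theorem polyGaussian_sq (v : ℝ) : polyGaussian k q v ^ 2 = polyGaussian (2 * k) (q ^ 2) v := by
  rw [polyGaussian, polyGaussian, eval_pow, mul_pow, ← Real.exp_nat_mul]
  push_cast
  ring_nf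

theorem integrable_polyGaussian {k : ℝ} (hk : 0 < k) (q : ℝ[X]) :
    Integrable (polyGaussian k q) := by
  induction q using Polynomial.induction_on' with
  | add p q hp hq =>
    refine (hp.add hq).congr (.of_forall fun v => ?_)
    simp only [Pi.add_apply, polyGaussian, eval_add, add_mul]
  | monomial m a =>
    have hm : (-1 : ℝ) < m := neg_one_lt_zero.trans_le m.cast_nonneg
    refine ((integrable_rpow_mul_exp_neg_mul_sq (half_pos hk) hm).const_mul a).congr
      (.of_forall fun v => ?_)
    simp only [polyGaussian, eval_monomial, Real.rpow_natCast]
    ring_nf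

theorem hasDerivAt_polyGaussian (v : ℝ) :
    HasDerivAt (polyGaussian k q) (polyGaussian k (derivative q - C k * X * q) v) v := by
  have hexponent : HasDerivAt (fun v : ℝ => -k * v ^ 2 / 2) (-k * v) v :=
    (((hasDerivAt_pow 2 v).const_mul (-k)).div_const 2).congr_deriv (by norm_num; ring)
  refine ((q.hasDerivAt v).mul hexponent.exp).congr_deriv ?_
  simp only [polyGaussian, eval_sub, eval_mul, eval_C, eval_X]
  ring

theorem deriv_polyGaussian :
    deriv (polyGaussian k q) = polyGaussian k (derivative q - C k * X * q) :=
  funext fun v => (hasDerivAt_polyGaussian k q v).deriv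

theorem harmonicOscillator_polyGaussian :
    harmonicOscillator k (polyGaussian k q) =
      polyGaussian k (-derivative (derivative q) + C (2 * k) * X * derivative q + C k * q) := by
  ext v
  simp only [harmonicOscillator, deriv_polyGaussian, polyGaussian, derivative_sub, derivative_mul,
    derivative_C, derivative_X, eval_add, eval_sub, eval_neg, eval_mul, eval_C, eval_X, eval_zero,
    eval_one]
  ring

theorem harmonicOscillator_polyGaussian_dilatedHermite {k s : ℝ} (hs : s ^ 2 = 2 * k) (n : ℕ) :
    harmonicOscillator k (polyGaussian k (dilatedHermite s n)) =
      (k * (2 * n + 1)) • polyGaussian k (dilatedHermite s n) := by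
  rw [harmonicOscillator_polyGaussian, derivative_derivative_dilatedHermite, hs]
  ext v
  simp only [polyGaussian, Pi.smul_apply, smul_eq_mul, eval_add, eval_sub, eval_neg, eval_mul,
    eval_C, eval_X, eval_natCast]
  ring

end PolyGaussian

/-- point spectrum of the harmonic oscillator: for real `k > 0` and
`n ∈ ℕ₀`, the function `f(v) = Heₙ(√(2k) v) e^{-k v²/2}` (with `Heₙ` the n-th
probabilists' Hermite polynomial) is a nonzero square-integrable eigenfunction of
`N_k = -∂² + k²v²` with eigenvalue `k(2n+1)`. -/
theorem harmonic_oscillator_eigenfunction (k : ℝ) (hk : 0 < k) (n : ℕ)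
    (f : ℝ → ℝ)
    (hf : ∀ v : ℝ, f v =
      (Polynomial.aeval (Real.sqrt (2 * k) * v)) (Polynomial.hermite n) *
        Real.exp (-k * v ^ 2 / 2)) :
    f ≠ 0 ∧ Integrable (fun v : ℝ => f v ^ 2) ∧
    ∀ v : ℝ, -deriv (deriv f) v + k ^ 2 * v ^ 2 * f v = k * (2 * n + 1) * f v := by
  obtain rfl : f = polyGaussian k (dilatedHermite √(2 * k) n) := by
    ext v
    rw [hf, polyGaussian, eval_dilatedHermite]
  have hsqrt_ne : √(2 * k) ≠ 0 := by positivity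
  have hsqrt_sq : √(2 * k) ^ 2 = 2 * k := Real.sq_sqrt (by positivity)
  refine ⟨?_, ?_, congrFun (harmonicOscillator_polyGaussian_dilatedHermite hsqrt_sq n)⟩
  · rw [Ne, polyGaussian_eq_zero_iff]
    exact dilatedHermite_ne_zero (mem_nonZeroDivisors_of_ne_zero hsqrt_ne) n
  · simp only [polyGaussian_sq]
    exact integrable_polyGaussian (by positivity) _
end
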